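/- (Remark after Corollary 4.1, Free boundary is Lebesgue-null) For every u ∈ 𝔍, the free boundary ∂{u>0} ∩ Q_{1/2} has (N+1)-dimensional Lebesgue measure zero. -/

import Mathlib

noncomputable section

open Set Metric MeasureTheory

/-- Euclidean space `ℝ^N`. -/
abbrev Euc (N : ℕ) := EuclideanSpace ℝ (Fin N)

/-- `s₊^q`: equals `(max s 0)^q` if `s > 0` and `0` otherwise. -/
def plusPowQ (q s : ℝ) : ℝ := if 0 < s then (max s 0) ^ q else 0

/-- The spatial gradient `∇u(x,t)`. -/
def spatialGrad (N : ℕ) (u : Euc N × ℝ → ℝ) (z : Euc N × ℝ) : Euc N :=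
  gradient (fun y => u (y, z.2)) z.1

/-- The vector field `V(y,t) = ‖∇u(y,t)‖^(p-2) ∇u(y,t)`. -/
def pVF (N : ℕ) (p : ℝ) (u : Euc N × ℝ → ℝ) (z : Euc N × ℝ) : Euc N :=
  ‖spatialGrad N u z‖ ^ (p - 2) • spatialGrad N u z

/-- The `p`-Laplacian `Δ_p u` realized as `trace (D_x V)` with `V = ‖∇u‖^(p-2)∇u`. -/
def pLap (N : ℕ) (p : ℝ) (u : Euc N × ℝ → ℝ) (z : Euc N × ℝ) : ℝ :=
  LinearMap.trace ℝ (Euc N) (fderiv ℝ (fun y => pVF N p u (y, z.2)) z.1).toLinearMap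

/-- The time derivative `∂ₜ u`. -/
def timeDeriv (N : ℕ) (u : Euc N × ℝ → ℝ) (z : Euc N × ℝ) : ℝ :=
  deriv (fun t => u (z.1, t)) z.2

/-- `u` is a classical solution of the dead-core equation `Δ_p u - ∂_t u = λ₀ u₊^q` on `D`:
`u` is continuous on `D` and at every point of `D` the spatial gradient and time derivative
exist, `V = ‖∇u‖^(p-2)∇u` is spatially differentiable, and the PDE holds. -/
def IsDCSol (N : ℕ) (p q : ℝ) (lam u : Euc N × ℝ → ℝ) (D : Set (Euc N × ℝ)) : Prop :=
  ContinuousOn u D ∧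
  ∀ z ∈ D,
    DifferentiableAt ℝ (fun y => u (y, z.2)) z.1 ∧
    DifferentiableAt ℝ (fun t => u (z.1, t)) z.2 ∧
    DifferentiableAt ℝ (fun y => pVF N p u (y, z.2)) z.1 ∧
    pLap N p u z - timeDeriv N u z = lam z * plusPowQ q (u z)

/-- The intrinsic scaling exponent `θ = p(1-q)/(p-1-q)`. -/
def thetaV (p q : ℝ) : ℝ := p * (1 - q) / (p - 1 - q)

/-- The intrinsic cylinder `Q_r(x₀,t₀) = B_r(x₀) × (t₀ - r^θ, t₀ + r^θ)`. -/
def cylQ (N : ℕ) (θ r : ℝ) (z0 : Euc N × ℝ) : Set (Euc N × ℝ) :=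
  (ball z0.1 r) ×ˢ (Ioo (z0.2 - r ^ θ) (z0.2 + r ^ θ))

/-- The lower cylinder `Q_r⁻(x₀,t₀) = B_r(x₀) × (t₀ - r^θ, t₀]`. -/
def cylQm (N : ℕ) (θ r : ℝ) (z0 : Euc N × ℝ) : Set (Euc N × ℝ) :=
  (ball z0.1 r) ×ˢ (Ioc (z0.2 - r ^ θ) z0.2)

/-- The upper cylinder `Q_r⁺(x₀,t₀) = B_r(x₀) × [t₀, t₀ + r^θ)`. -/
def cylQp (N : ℕ) (θ r : ℝ) (z0 : Euc N × ℝ) : Set (Euc N × ℝ) :=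
  (ball z0.1 r) ×ˢ (Ico z0.2 (z0.2 + r ^ θ))

/-- The parabolic boundary of `Q_r⁻(x₀,t₀)`:
`(closure(B_r) × {t₀ - r^θ}) ∪ (∂B_r × (t₀ - r^θ, t₀])`. -/
def parBdryQm (N : ℕ) (θ r : ℝ) (z0 : Euc N × ℝ) : Set (Euc N × ℝ) :=
  ((closedBall z0.1 r) ×ˢ ({z0.2 - r ^ θ} : Set ℝ)) ∪
    ((sphere z0.1 r) ×ˢ (Ioc (z0.2 - r ^ θ) z0.2))

/-- The class `𝔍 = 𝔍_p(λ₀,q)(Q₁)`: classical solutions `u` on `Q₁` (for some `λ₀` with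
`m ≤ λ₀ ≤ M`) with `0 ≤ u ≤ 1`, `∂ₜ u ≥ 0` on `Q₁` and `u(0,0) = 0`. -/
def memJ (N : ℕ) (p q m M : ℝ) (u : Euc N × ℝ → ℝ) : Prop :=
  ∃ lam : Euc N × ℝ → ℝ,
    (∀ z ∈ cylQ N (thetaV p q) 1 (0, 0), m ≤ lam z ∧ lam z ≤ M) ∧
    IsDCSol N p q lam u (cylQ N (thetaV p q) 1 (0, 0)) ∧
    (∀ z ∈ cylQ N (thetaV p q) 1 (0, 0), 0 ≤ u z ∧ u z ≤ 1) ∧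
    (∀ z ∈ cylQ N (thetaV p q) 1 (0, 0), 0 ≤ timeDeriv N u z) ∧
    u (0, 0) = 0

/-- `S_r[u] = sup over Q_r⁻ of u` (cylinders centered at the origin). -/
def Sr (N : ℕ) (p q r : ℝ) (u : Euc N × ℝ → ℝ) : ℝ :=
  sSup (u '' cylQm N (thetaV p q) r (0, 0))

/-!
Since `∂ₜ u ≥ 0`, every time slice of `u` satisfies `Δ_p v ≥ m v^q` where it is positive.

Comparing such a `v` with the barrier `c‖y - x‖^(2(j+1))`, where `(j+1)q ≤ j` and `c` is small, at
a positivity point `x` gives `sup_{B_r(x)} v ≥ c r^k` with `c` and `k` independent of the slice and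
of `x`. Any power suffices, so the sharp exponent `α₀` is not used. The bound is stable under limits
in space-time, hence holds at every free boundary point on the slice through it.

On the other hand, `Δ_p v ≥ 0` and the Alexandrov–Bakelman–Pucci estimate bound `v` at the center
of a ball by a positive power of the density of `{v > 0}` there. At a Lebesgue density point of
`{v ≤ 0}` iterating this on dyadic balls makes `v` vanish faster than every power of the distance.
So on each slice the free boundary consists of non-density points of `{v ≤ 0}`, which form a null
set, and Fubini concludes.
-/

open Filter Topology Module
open scoped Gradient InnerProductSpace

section SecondOrder

lemma eventually_mul_sub_le_of_hasDerivAt {g : ℝ → ℝ} {a b x : ℝ} (hg : HasDerivAt g a x)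
    (hgx : g x = 0) (hb : b < a) : ∀ᶠ s in 𝓝[>] x, b * (s - x) ≤ g s := by
  have hslope : ∀ᶠ s in 𝓝[>] x, b < slope g x s :=
    ((hasDerivAt_iff_tendsto_slope.1 hg).mono_left
      (nhdsWithin_mono x fun _ hs => ne_of_gt hs)).eventually (lt_mem_nhds hb)
  filter_upwards [hslope, self_mem_nhdsWithin] with s hs hxs
  rw [slope_def_field, hgx, sub_zero, lt_div_iff₀ (sub_pos.2 hxs)] at hs
  exact hs.le

lemma eventually_add_sq_le_of_mul_sub_le_deriv {f f' : ℝ → ℝ} {b x : ℝ}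
    (hf : ∀ᶠ s in 𝓝 x, HasDerivAt f (f' s) s) (hb : ∀ᶠ s in 𝓝[>] x, b * (s - x) ≤ f' s) :
    ∀ᶠ s in 𝓝[>] x, f x + b / 2 * (s - x) ^ 2 ≤ f s := by
  obtain ⟨ε, hε, hfε⟩ := Metric.eventually_nhds_iff_ball.1 hf
  obtain ⟨η, hη, hbη⟩ := mem_nhdsGT_iff_exists_Ioo_subset.1 hb
  filter_upwards [Ioo_mem_nhdsGT (lt_min (lt_add_of_pos_right x hε) hη)] with s hs
  obtain ⟨hsε, hsη⟩ := lt_min_iff.1 hs.2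
  have hderiv : ∀ y ∈ Icc x s,
      HasDerivAt (fun y => f y - b / 2 * (y - x) ^ 2) (f' y - b * (y - x)) y := by
    intro y hy
    have hquad := (((hasDerivAt_id y).sub_const x).pow 2).const_mul (b / 2)
    refine ((hfε y ?_).sub hquad).congr_deriv (by simp only [id_eq]; ring)
    rw [Real.ball_eq_Ioo]
    exact ⟨by linarith [hy.1], by linarith [hy.2]⟩
  have hmono : MonotoneOn (fun y => f y - b / 2 * (y - x) ^ 2) (Icc x s) := by
    refine monotoneOn_of_deriv_nonneg (convex_Icc x s)
      (fun y hy => (hderiv y hy).continuousAt.continuousWithinAt)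
      (fun y hy => (hderiv y (interior_subset hy)).differentiableAt.differentiableWithinAt)
      fun y hy => ?_
    rw [(hderiv y (interior_subset hy)).deriv, sub_nonneg]
    rw [interior_Icc] at hy
    exact hbη ⟨hy.1, hy.2.trans hsη⟩
  have hle := hmono (left_mem_Icc.2 hs.1.le) (right_mem_Icc.2 hs.1.le) hs.1.le
  simp only [sub_self] at hle
  linarith

lemma second_deriv_nonpos_of_isLocalMax {f f' : ℝ → ℝ} {a x : ℝ}
    (hf : ∀ᶠ s in 𝓝 x, HasDerivAt f (f' s) s) (hf' : HasDerivAt f' a x) (hmax : IsLocalMax f x) :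
    a ≤ 0 := by
  by_contra! ha
  have hslope := eventually_mul_sub_le_of_hasDerivAt hf'
    (hmax.hasDerivAt_eq_zero hf.self_of_nhds) (half_lt_self ha)
  obtain ⟨s, ⟨hgrow, hle⟩, hxs⟩ := (((eventually_add_sq_le_of_mul_sub_le_deriv hf hslope).and
    (hmax.filter_mono nhdsWithin_le_nhds)).and self_mem_nhdsWithin).exists
  have : 0 < a / 2 / 2 * (s - x) ^ 2 := mul_pos (by positivity) (pow_pos (sub_pos.2 hxs) 2)
  linarith

variable {E : Type*} [NormedAddCommGroup E] [InnerProductSpace ℝ E]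

lemma tendsto_add_smul_nhds_zero (y h : E) : Tendsto (fun s : ℝ => y + s • h) (𝓝 0) (𝓝 y) := by
  have hcont : Continuous fun s : ℝ => y + s • h := by fun_prop
  simpa using hcont.tendsto 0

lemma hasDerivAt_comp_add_smul {F : Type*} [NormedAddCommGroup F] [NormedSpace ℝ F] {G : E → F}
    {A : E →L[ℝ] F} {y h : E} {s : ℝ} (hG : HasFDerivAt G A (y + s • h)) :
    HasDerivAt (fun s : ℝ => G (y + s • h)) (A h) s := by
  have hline : HasDerivAt (fun s : ℝ => y + s • h) h s := by
    simpa using ((hasDerivAt_id s).smul_const h).const_add y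
  exact hG.comp_hasDerivAt s hline

lemma isLocalMax_comp_add_smul {w : E → ℝ} {y : E} (hmax : IsLocalMax w y) (h : E) :
    IsLocalMax (fun s : ℝ => w (y + s • h)) 0 := by
  filter_upwards [(tendsto_add_smul_nhds_zero y h).eventually hmax] with s hs
  simpa using hs

variable [CompleteSpace E]

lemma hasGradientAt_sub {v φ : E → ℝ} {g k y : E} (hv : HasGradientAt v g y)
    (hφ : HasGradientAt φ k y) : HasGradientAt (fun z => v z - φ z) (g - k) y := by
  rw [hasGradientAt_iff_hasFDerivAt] at *
  rw [map_sub]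
  exact hv.sub hφ

lemma hasDerivAt_comp_add_smul_of_hasGradientAt {w : E → ℝ} {g y h : E} {s : ℝ}
    (hw : HasGradientAt w g (y + s • h)) :
    HasDerivAt (fun s : ℝ => w (y + s • h)) ⟪g, h⟫_ℝ s :=
  hasDerivAt_comp_add_smul hw.hasFDerivAt

lemma gradient_eq_of_isLocalMax_sub {v φ : E → ℝ} {k y : E} (hv : DifferentiableAt ℝ v y)
    (hφ : HasGradientAt φ k y) (hmax : IsLocalMax (fun z => v z - φ z) y) : ∇ v y = k := by
  have hzero := hmax.hasFDerivAt_eq_zero (hasGradientAt_sub hv.hasGradientAt hφ).hasFDerivAt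
  rwa [map_eq_zero_iff _ (InnerProductSpace.toDual ℝ E).injective, sub_eq_zero] at hzero

lemma inner_hessian_nonpos_of_isLocalMax {w : E → ℝ} {G : E → E} {A : E →L[ℝ] E} {y : E}
    (hw : ∀ᶠ z in 𝓝 y, HasGradientAt w (G z) z) (hG : HasFDerivAt G A y)
    (hmax : IsLocalMax w y) (h : E) : ⟪A h, h⟫_ℝ ≤ 0 := by
  refine second_deriv_nonpos_of_isLocalMax (f := fun s : ℝ => w (y + s • h))
    (f' := fun s => ⟪G (y + s • h), h⟫_ℝ) ?_ ?_ (isLocalMax_comp_add_smul hmax h)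
  · filter_upwards [(tendsto_add_smul_nhds_zero y h).eventually hw] with s hs
    exact hasDerivAt_comp_add_smul_of_hasGradientAt hs
  · have hG0 : HasFDerivAt G A (y + (0 : ℝ) • h) := by simpa using hG
    simpa using (hasDerivAt_comp_add_smul hG0).inner ℝ (hasDerivAt_const (0 : ℝ) h)

lemma inner_hessian_le_of_isLocalMax_sub {v φ : E → ℝ} {K : E → E} {A B : E →L[ℝ] E} {y : E}
    (hv : ∀ᶠ z in 𝓝 y, DifferentiableAt ℝ v z) (hA : HasFDerivAt (∇ v) A y)
    (hφ : ∀ᶠ z in 𝓝 y, HasGradientAt φ (K z) z) (hB : HasFDerivAt K B y)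
    (hmax : IsLocalMax (fun z => v z - φ z) y) (h : E) : ⟪A h, h⟫_ℝ ≤ ⟪B h, h⟫_ℝ := by
  have hsub : ∀ᶠ z in 𝓝 y, HasGradientAt (fun z => v z - φ z) (∇ v z - K z) z := by
    filter_upwards [hv, hφ] with z hvz hφz using hasGradientAt_sub hvz.hasGradientAt hφz
  simpa [inner_sub_left] using inner_hessian_nonpos_of_isLocalMax hsub (hA.sub hB) hmax h

lemma isSymmetric_fderiv_gradient {v : E → ℝ} {y : E} {A : E →L[ℝ] E}
    (hv : ∀ᶠ z in 𝓝 y, DifferentiableAt ℝ v z) (hA : HasFDerivAt (∇ v) A y) :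
    A.IsSymmetric := by
  have hfderiv : HasFDerivAt (fderiv ℝ v) ((innerSL ℝ).comp A) y := by
    have heq : fderiv ℝ v = innerSL ℝ ∘ ∇ v := by
      ext z h
      simp
    rw [heq]
    exact (innerSL ℝ).hasFDerivAt.comp y hA
  intro a b
  have hsymm := second_derivative_symmetric_of_eventually
    (hv.mono fun z hz => hz.hasFDerivAt) hfderiv a b
  simp only [ContinuousLinearMap.comp_apply, innerSL_apply_apply] at hsymm
  exact hsymm.trans (real_inner_comm _ _)

end SecondOrder

section SymmetricOperators

variable {E : Type*} [NormedAddCommGroup E] [InnerProductSpace ℝ E] [FiniteDimensional ℝ E]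
  {A : E →L[ℝ] E} {K Λ : ℝ}

lemma trace_le_finrank_mul (hA : ∀ h, ⟪A h, h⟫_ℝ ≤ Λ * ‖h‖ ^ 2) :
    LinearMap.trace ℝ E A ≤ finrank ℝ E * Λ := by
  let b := stdOrthonormalBasis ℝ E
  rw [LinearMap.trace_eq_sum_inner _ b]
  have hdiag : ∀ i ∈ Finset.univ, ⟪b i, A (b i)⟫_ℝ ≤ Λ := fun i _ => by
    simpa [real_inner_comm] using hA (b i)
  simpa using Finset.sum_le_card_nsmul _ _ _ hdiag

lemma abs_det_le_pow_finrank_of_nonpos (hsymm : A.IsSymmetric) (hA : ∀ h, ⟪A h, h⟫_ℝ ≤ 0)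
    (htrace : -K ≤ LinearMap.trace ℝ E A) : |A.det| ≤ K ^ finrank ℝ E := by
  have hnonpos : ∀ i, hsymm.eigenvalues rfl i ≤ 0 := fun i => by
    have hquad := hA (hsymm.eigenvectorBasis rfl i)
    have heigen := hsymm.apply_eigenvectorBasis rfl i
    rw [ContinuousLinearMap.coe_coe] at heigen
    simpa [heigen, inner_smul_left] using hquad
  have hsum : ∑ i, -hsymm.eigenvalues rfl i ≤ K := by
    have := hsymm.trace_eq_sum_eigenvalues rfl
    rw [Finset.sum_neg_distrib]
    simp only [RCLike.ofReal_real_eq_id, id_eq] at this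
    linarith
  have hdet : A.det = ∏ i, hsymm.eigenvalues rfl i := hsymm.det_eq_prod_eigenvalues rfl
  rw [hdet, Finset.abs_prod]
  calc ∏ i, |hsymm.eigenvalues rfl i| ≤ ∏ _i : Fin (finrank ℝ E), K := by
        refine Finset.prod_le_prod (fun i _ => abs_nonneg _) fun i _ => ?_
        rw [abs_of_nonpos (hnonpos i)]
        exact (Finset.single_le_sum (f := fun j => -hsymm.eigenvalues rfl j)
          (fun j _ => neg_nonneg.2 (hnonpos j)) (Finset.mem_univ i)).trans hsum
    _ = K ^ finrank ℝ E := by simp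

lemma abs_det_sub_smul_id_le (hsymm : A.IsSymmetric) (hA : ∀ h, ⟪A h, h⟫_ℝ ≤ Λ * ‖h‖ ^ 2)
    (htrace : -K ≤ LinearMap.trace ℝ E A) :
    |(A - Λ • ContinuousLinearMap.id ℝ E).det| ≤ (K + finrank ℝ E * Λ) ^ finrank ℝ E := by
  refine abs_det_le_pow_finrank_of_nonpos (fun a b => ?_) (fun h => ?_) ?_
  · have := hsymm a b
    simp only [ContinuousLinearMap.coe_coe] at this
    simp [inner_sub_left, inner_sub_right, inner_smul_left, inner_smul_right, this]
  · simpa [inner_sub_left, inner_smul_left] using hA h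
  · simp only [ContinuousLinearMap.toLinearMap_sub, ContinuousLinearMap.toLinearMap_smul,
      ContinuousLinearMap.coe_id, map_sub, map_smul, LinearMap.trace_id, smul_eq_mul]
    linarith

end SymmetricOperators

section PLaplacian

variable {E : Type*} [NormedAddCommGroup E]

lemma norm_rpow_smul_norm_rpow_smul [NormedSpace ℝ E] {r : ℝ} (hr : r + 1 ≠ 0) (g : E) :
    ‖‖g‖ ^ r • g‖ ^ (-(r / (r + 1))) • ‖g‖ ^ r • g = g := by
  rcases eq_or_ne g 0 with rfl | hg
  · simp
  have hpos : 0 < ‖g‖ := norm_pos_iff.2 hg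
  have hnorm : ‖‖g‖ ^ r • g‖ = ‖g‖ ^ (r + 1) := by
    rw [norm_smul, Real.norm_of_nonneg (by positivity), Real.rpow_add_one hpos.ne']
  have hexp : (r + 1) * -(r / (r + 1)) + r = 0 := by
    field_simp
    ring
  rw [hnorm, ← Real.rpow_mul hpos.le, smul_smul, ← Real.rpow_add hpos, hexp, Real.rpow_zero,
    one_smul]

variable [InnerProductSpace ℝ E]

lemma differentiableAt_of_norm_rpow_smul {F : Type*} [NormedAddCommGroup F] [NormedSpace ℝ F]
    {r : ℝ} (hr : r + 1 ≠ 0) {G : F → E} {y : F}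
    (hG : DifferentiableAt ℝ (fun z => ‖G z‖ ^ r • G z) y) (hy : G y ≠ 0) :
    DifferentiableAt ℝ G y := by
  have hpos : 0 < ‖G y‖ := norm_pos_iff.2 hy
  have hne : ‖G y‖ ^ r • G y ≠ 0 := smul_ne_zero (Real.rpow_pos_of_pos hpos r).ne' hy
  have hinv := ((hG.norm ℝ hne).rpow_const (p := -(r / (r + 1)))
    (Or.inl (norm_ne_zero_iff.2 hne))).smul hG
  refine hinv.congr_of_eventuallyEq (Eventually.of_forall fun z => ?_)
  exact (norm_rpow_smul_norm_rpow_smul hr (G z)).symm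

lemma hasFDerivAt_norm_rpow_smul {F : Type*} [NormedAddCommGroup F] [NormedSpace ℝ F]
    {G : F → E} {A : F →L[ℝ] E} {y : F} (hG : HasFDerivAt G A y) (hy : G y ≠ 0) (r : ℝ) :
    HasFDerivAt (fun z => ‖G z‖ ^ r • G z) (‖G y‖ ^ r • (A +
      ((r / ‖G y‖ ^ 2) • (innerSL ℝ (G y)).comp A).smulRight (G y))) y := by
  have hpos : 0 < ‖G y‖ := norm_pos_iff.2 hy
  have hsq : ∀ g : E, (‖g‖ ^ 2) ^ (r / 2) = ‖g‖ ^ r := fun g => by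
    rw [← Real.rpow_natCast, ← Real.rpow_mul (norm_nonneg g)]
    congr 1
    push_cast
    ring
  have hpow : HasFDerivAt (fun z => ‖G z‖ ^ r)
      ((‖G y‖ ^ r * (r / ‖G y‖ ^ 2)) • (innerSL ℝ (G y)).comp A) y := by
    have := hG.norm_sq.rpow_const (p := r / 2) (Or.inl (by positivity))
    simp only [hsq, Real.rpow_sub_one (pow_pos hpos 2).ne'] at this
    convert this using 1
    ext h
    simp only [smul_apply, ContinuousLinearMap.comp_apply, coe_innerSL_apply, smul_eq_mul,
      nsmul_eq_mul, Nat.cast_ofNat]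
    ring
  refine (hpow.smul hG).congr_fderiv ?_
  ext h
  simp [smul_smul, mul_assoc]

variable [FiniteDimensional ℝ E]

/-- The flux `‖∇v‖^(p-2) ∇v`, whose divergence is the `p`-Laplacian of `v`. -/
def pFlux (p : ℝ) (v : E → ℝ) (y : E) : E := ‖∇ v y‖ ^ (p - 2) • ∇ v y

/-- The `p`-Laplacian `div (‖∇v‖^(p-2) ∇v)`, the divergence being the trace of the Fréchet
derivative; it is a genuine pointwise value only where the flux is differentiable. -/
def pLaplacian (p : ℝ) (v : E → ℝ) (y : E) : ℝ := LinearMap.trace ℝ E (fderiv ℝ (pFlux p v) y)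

lemma pLaplacian_eq_of_hasFDerivAt_gradient {v : E → ℝ} {y : E} {A : E →L[ℝ] E}
    (hA : HasFDerivAt (∇ v) A y) (hy : ∇ v y ≠ 0) (p : ℝ) :
    pLaplacian p v y = ‖∇ v y‖ ^ (p - 2) *
      (LinearMap.trace ℝ E A + (p - 2) * (⟪A (∇ v y), ∇ v y⟫_ℝ / ‖∇ v y‖ ^ 2)) := by
  have hflux : HasFDerivAt (pFlux p v) _ y := hasFDerivAt_norm_rpow_smul hA hy (p - 2)
  rw [pLaplacian, hflux.fderiv]
  simp only [ContinuousLinearMap.toLinearMap_smul, ContinuousLinearMap.toLinearMap_add,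
    ContinuousLinearMap.coe_smulRight, map_smul, map_add, smul_eq_mul, LinearMap.trace_smulRight,
    ContinuousLinearMap.coe_coe, LinearMap.smul_apply, ContinuousLinearMap.comp_apply,
    innerSL_apply_apply, real_inner_comm]
  ring

variable {p Λ : ℝ} {v : E → ℝ} {y : E} {A : E →L[ℝ] E}

lemma differentiableAt_gradient_of_pFlux (hp : p ≠ 1) (hv : DifferentiableAt ℝ (pFlux p v) y)
    (hy : ∇ v y ≠ 0) : DifferentiableAt ℝ (∇ v) y :=
  differentiableAt_of_norm_rpow_smul (by contrapose! hp; linarith) hv hy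

lemma pLaplacian_le_of_inner_hessian_le (hp : 2 ≤ p) (hA : HasFDerivAt (∇ v) A y)
    (hy : ∇ v y ≠ 0) (hle : ∀ h, ⟪A h, h⟫_ℝ ≤ Λ * ‖h‖ ^ 2) :
    pLaplacian p v y ≤ ‖∇ v y‖ ^ (p - 2) * ((finrank ℝ E + (p - 2)) * Λ) := by
  rw [pLaplacian_eq_of_hasFDerivAt_gradient hA hy]
  have hquot : ⟪A (∇ v y), ∇ v y⟫_ℝ / ‖∇ v y‖ ^ 2 ≤ Λ :=
    (div_le_iff₀ (pow_pos (norm_pos_iff.2 hy) 2)).2 (hle _)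
  refine mul_le_mul_of_nonneg_left ?_ (by positivity)
  linarith [trace_le_finrank_mul hle, mul_le_mul_of_nonneg_left hquot (sub_nonneg.2 hp)]

lemma neg_le_trace_of_pLaplacian_nonneg (hp : 2 ≤ p) (hA : HasFDerivAt (∇ v) A y)
    (hy : ∇ v y ≠ 0) (hle : ∀ h, ⟪A h, h⟫_ℝ ≤ Λ * ‖h‖ ^ 2) (hsub : 0 ≤ pLaplacian p v y) :
    -((p - 2) * Λ) ≤ LinearMap.trace ℝ E A := by
  rw [pLaplacian_eq_of_hasFDerivAt_gradient hA hy] at hsub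
  have hpos : 0 < ‖∇ v y‖ := norm_pos_iff.2 hy
  have hquot : ⟪A (∇ v y), ∇ v y⟫_ℝ / ‖∇ v y‖ ^ 2 ≤ Λ :=
    (div_le_iff₀ (pow_pos hpos 2)).2 (hle _)
  have hsum := nonneg_of_mul_nonneg_right hsub (Real.rpow_pos_of_pos hpos _)
  linarith [mul_le_mul_of_nonneg_left hquot (sub_nonneg.2 hp)]

end PLaplacian

/-- `v` is, on `U`, a pointwise subsolution of `Δ_p v = f(v)` where it is positive; the flux is
required to be differentiable on all of `U`, so that `pLaplacian` has its classical meaning. -/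
structure IsPLaplaceSubsolOn {E : Type*} [NormedAddCommGroup E] [InnerProductSpace ℝ E]
    [FiniteDimensional ℝ E] (p : ℝ) (f : ℝ → ℝ) (v : E → ℝ) (U : Set E) : Prop where
  differentiableAt : ∀ y ∈ U, DifferentiableAt ℝ v y
  differentiableAt_pFlux : ∀ y ∈ U, DifferentiableAt ℝ (pFlux p v) y
  le_pLaplacian : ∀ y ∈ U, 0 < v y → f (v y) ≤ pLaplacian p v y

section Subsolutions

variable {E : Type*} [NormedAddCommGroup E] [InnerProductSpace ℝ E] [FiniteDimensional ℝ E]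
  {p : ℝ} {f g : ℝ → ℝ} {v : E → ℝ} {U : Set E}

lemma IsPLaplaceSubsolOn.continuousOn (hv : IsPLaplaceSubsolOn p f v U) : ContinuousOn v U :=
  fun y hy => (hv.differentiableAt y hy).continuousAt.continuousWithinAt

lemma IsPLaplaceSubsolOn.mono_source (hv : IsPLaplaceSubsolOn p f v U)
    (hgf : ∀ s, 0 < s → g s ≤ f s) : IsPLaplaceSubsolOn p g v U :=
  ⟨hv.differentiableAt, hv.differentiableAt_pFlux,
    fun y hy hpos => (hgf _ hpos).trans (hv.le_pLaplacian y hy hpos)⟩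

end Subsolutions

section ABP

lemma addHaar_image_le_of_abs_det_fderiv_le {E : Type*} [NormedAddCommGroup E] [NormedSpace ℝ E]
    [FiniteDimensional ℝ E] [MeasurableSpace E] [BorelSpace E] (μ : Measure E)
    [μ.IsAddHaarMeasure] (Φ : E → E) (K : ℝ) {s : Set E} (hs : MeasurableSet s) :
    μ (Φ '' {y ∈ s | DifferentiableAt ℝ Φ y ∧ |(fderiv ℝ Φ y).det| ≤ K}) ≤
      ENNReal.ofReal K * μ s := by
  set T := {y ∈ s | DifferentiableAt ℝ Φ y ∧ |(fderiv ℝ Φ y).det| ≤ K}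
  have hdet : Measurable fun y => |(fderiv ℝ Φ y).det| :=
    (ContinuousLinearMap.continuous_det.measurable.comp (measurable_fderiv ℝ Φ)).abs
  have hT : MeasurableSet T :=
    hs.inter ((measurableSet_of_differentiableAt ℝ Φ).inter (hdet measurableSet_Iic))
  calc μ (Φ '' T) ≤ ∫⁻ y in T, ENNReal.ofReal |(fderiv ℝ Φ y).det| ∂μ :=
        addHaar_image_le_lintegral_abs_det_fderiv μ hT
          fun y hy => hy.2.1.hasFDerivAt.hasFDerivWithinAt
    _ ≤ ∫⁻ _ in T, ENNReal.ofReal K ∂μ :=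
        setLIntegral_mono' hT fun y hy => ENNReal.ofReal_le_ofReal hy.2.2
    _ = ENNReal.ofReal K * μ T := setLIntegral_const T _
    _ ≤ ENNReal.ofReal K * μ s := by gcongr; exact sep_subset s _

variable {E : Type*} [NormedAddCommGroup E] [InnerProductSpace ℝ E]

lemma exists_isMaxOn_sub_inner [ProperSpace E] {w : E → ℝ} {x ξ : E} {r : ℝ} (hr : 0 ≤ r)
    (hw : ContinuousOn w (closedBall x r)) (hsphere : ∀ z ∈ sphere x r, w z ≤ 0)
    (hξ : ‖ξ‖ * r < w x) :
    ∃ y ∈ ball x r, 0 < w y ∧ IsMaxOn (fun z => w z - ⟪ξ, z - x⟫_ℝ) (closedBall x r) y := by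
  obtain ⟨y, hy, hmax⟩ := (isCompact_closedBall x r).exists_isMaxOn
    ⟨x, mem_closedBall_self hr⟩ (hw.sub (f := w) (g := fun z => ⟪ξ, z - x⟫_ℝ) (by fun_prop))
  have hpos : 0 < w y := by
    have hx : w x ≤ w y - ⟪ξ, y - x⟫_ℝ := by simpa using hmax (mem_closedBall_self hr)
    have hinner : -(‖ξ‖ * r) ≤ ⟪ξ, y - x⟫_ℝ := by
      refine (neg_le_neg ?_).trans (neg_le_of_abs_le (abs_real_inner_le_norm ξ (y - x)))
      gcongr
      exact mem_closedBall_iff_norm.1 hy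
    linarith
  have hball : dist y x ≠ r := fun h => (hsphere y h).not_gt hpos
  exact ⟨y, lt_of_le_of_ne hy hball, hpos, hmax⟩

lemma hasGradientAt_const_mul_norm_sub_sq_add_inner [CompleteSpace E] (C : ℝ) (x ξ y : E) :
    HasGradientAt (fun z => C * ‖z - x‖ ^ 2 + ⟪ξ, z - x⟫_ℝ) ((2 * C) • (y - x) + ξ) y := by
  have hsub := (hasFDerivAt_id (𝕜 := ℝ) y).sub_const x
  rw [hasGradientAt_iff_hasFDerivAt]
  refine ((hsub.norm_sq.const_mul C).add ((innerSL ℝ ξ).hasFDerivAt.comp y hsub)).congr_fderiv ?_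
  ext h
  simp only [id_eq, map_sub, ContinuousLinearMap.comp_id, add_apply, smul_apply, sub_apply,
    coe_innerSL_apply, nsmul_eq_mul, Nat.cast_ofNat, smul_eq_mul, map_add, map_smul,
    InnerProductSpace.toDual_apply_apply]
  ring

lemma hasFDerivAt_smul_sub (c : ℝ) (x y : E) :
    HasFDerivAt (fun z : E => c • (z - x)) (c • ContinuousLinearMap.id ℝ E) y :=
  ((hasFDerivAt_id y).sub_const x).const_smul c

/-- The field `z ↦ G z - 2C(z - x)`. For `G = ∇v` it is the gradient of `v - C‖· - x‖²`, whose image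
of the upper contact set is estimated in the Alexandrov–Bakelman–Pucci argument. -/
def contactMap (C : ℝ) (x : E) (G : E → E) (z : E) : E := G z - (2 * C) • (z - x)

lemma hasFDerivAt_contactMap {G : E → E} {A : E →L[ℝ] E} {y : E} (hG : HasFDerivAt G A y) (C : ℝ)
    (x : E) :
    HasFDerivAt (contactMap C x G) (A - (2 * C) • ContinuousLinearMap.id ℝ E) y :=
  hG.sub (hasFDerivAt_smul_sub (2 * C) x y)

variable [FiniteDimensional ℝ E] {p C r : ℝ} {v : E → ℝ} {U : Set E} {x y ξ : E}

lemma abs_det_fderiv_contactMap_gradient_le (hp : 2 ≤ p) (hv : IsPLaplaceSubsolOn p 0 v U)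
    (hU : U ∈ 𝓝 y) (hy : 0 < v y) (hgrad : ∇ v y ≠ 0)
    (hmax : IsLocalMax (fun z => v z - (C * ‖z - x‖ ^ 2 + ⟪ξ, z - x⟫_ℝ)) y) :
    DifferentiableAt ℝ (contactMap C x (∇ v)) y ∧ |(fderiv ℝ (contactMap C x (∇ v)) y).det| ≤
      ((finrank ℝ E + (p - 2)) * (2 * C)) ^ finrank ℝ E := by
  have hA := (differentiableAt_gradient_of_pFlux (by linarith)
    (hv.differentiableAt_pFlux y (mem_of_mem_nhds hU)) hgrad).hasFDerivAt
  have hdiff : ∀ᶠ z in 𝓝 y, DifferentiableAt ℝ v z :=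
    mem_of_superset hU hv.differentiableAt
  have hle : ∀ h, ⟪fderiv ℝ (∇ v) y h, h⟫_ℝ ≤ 2 * C * ‖h‖ ^ 2 := fun h => by
    refine (inner_hessian_le_of_isLocalMax_sub hdiff hA (Eventually.of_forall
      (hasGradientAt_const_mul_norm_sub_sq_add_inner C x ξ))
      ((hasFDerivAt_smul_sub (2 * C) x y).add_const ξ) hmax h).trans_eq ?_
    simp [inner_smul_left]
  have htrace := neg_le_trace_of_pLaplacian_nonneg hp hA hgrad hle
    (hv.le_pLaplacian y (mem_of_mem_nhds hU) hy)
  have hΦ := hasFDerivAt_contactMap hA C x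
  refine ⟨hΦ.differentiableAt, hΦ.fderiv ▸ ?_⟩
  refine (abs_det_sub_smul_id_le (isSymmetric_fderiv_gradient hdiff hA) hle htrace).trans_eq ?_
  ring

lemma abs_det_fderiv_contactMap_zero_le (hp : 2 ≤ p) (hC : 0 ≤ C) (x y : E) :
    DifferentiableAt ℝ (contactMap C x 0) y ∧ |(fderiv ℝ (contactMap C x 0) y).det| ≤
      ((finrank ℝ E + (p - 2)) * (2 * C)) ^ finrank ℝ E := by
  have hle : ∀ h : E, ⟪(0 : E →L[ℝ] E) h, h⟫_ℝ ≤ 2 * C * ‖h‖ ^ 2 := fun h => by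
    rw [zero_apply, inner_zero_left]
    positivity
  have htrace : -((p - 2) * (2 * C)) ≤ LinearMap.trace ℝ E (0 : E →L[ℝ] E) := by
    have : 0 ≤ (p - 2) * (2 * C) := mul_nonneg (sub_nonneg.2 hp) (by positivity)
    simpa using this
  have hsymm : (0 : E →L[ℝ] E).IsSymmetric := fun a b => by simp
  have hΨ := hasFDerivAt_contactMap (hasFDerivAt_zero y) C x
  refine ⟨hΨ.differentiableAt, hΨ.fderiv ▸ ?_⟩
  refine (abs_det_sub_smul_id_le hsymm hle htrace).trans_eq ?_
  ring

-- Contact points where `∇v` vanishes, at which `∇v` may fail to be differentiable, are mapped by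
-- `contactMap C x (∇ v)` as by `contactMap C x 0`.
lemma ball_subset_image_contactMap (hp : 2 ≤ p) (hv : IsPLaplaceSubsolOn p 0 v U)
    (hr : 0 < r) (hxr : closedBall x r ⊆ U) (hC : 0 ≤ C)
    (hsphere : ∀ z ∈ sphere x r, v z ≤ C * r ^ 2) :
    let K := ((finrank ℝ E + (p - 2)) * (2 * C)) ^ finrank ℝ E
    ∀ ξ ∈ ball 0 (v x / r), ∃ G ∈ ({∇ v, 0} : Set (E → E)), ξ ∈ contactMap C x G ''
      {y ∈ ball x r ∩ {z | 0 < v z} | DifferentiableAt ℝ (contactMap C x G) y ∧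
        |(fderiv ℝ (contactMap C x G) y).det| ≤ K} := by
  intro K ξ hξ
  rw [mem_ball_zero_iff, lt_div_iff₀ hr] at hξ
  have hcont : ContinuousOn (fun z => v z - C * ‖z - x‖ ^ 2) (closedBall x r) :=
    (hv.continuousOn.mono hxr).sub (by fun_prop)
  obtain ⟨y, hy, hpos, hmax⟩ := exists_isMaxOn_sub_inner hr.le hcont
    (fun z hz => by simpa [mem_sphere_iff_norm.1 hz] using hsphere z hz) (by simpa using hξ)
  have hvy : 0 < v y := hpos.trans_le (sub_le_self _ (by positivity))
  have hnhds : closedBall x r ∈ 𝓝 y := closedBall_mem_nhds_of_mem hy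
  have hloc : IsLocalMax (fun z => v z - (C * ‖z - x‖ ^ 2 + ⟪ξ, z - x⟫_ℝ)) y := by
    simpa only [sub_sub] using hmax.isLocalMax hnhds
  have hgrad : ∇ v y = (2 * C) • (y - x) + ξ := gradient_eq_of_isLocalMax_sub
    (hv.differentiableAt y (hxr (ball_subset_closedBall hy)))
    (hasGradientAt_const_mul_norm_sub_sq_add_inner C x ξ y) hloc
  rcases eq_or_ne (∇ v y) 0 with hzero | hne
  · refine ⟨0, mem_insert_of_mem _ rfl, y,
      ⟨⟨hy, hvy⟩, abs_det_fderiv_contactMap_zero_le hp hC x y⟩, ?_⟩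
    rw [contactMap, Pi.zero_apply, ← hzero, hgrad, add_sub_cancel_left]
  · refine ⟨∇ v, mem_insert _ _, y, ⟨⟨hy, hvy⟩, abs_det_fderiv_contactMap_gradient_le hp hv
      (mem_of_superset hnhds hxr) hvy hne hloc⟩, ?_⟩
    rw [contactMap, hgrad, add_sub_cancel_left]

lemma addHaar_ball_le_of_isPLaplaceSubsolOn [MeasurableSpace E] [BorelSpace E] (μ : Measure E)
    [μ.IsAddHaarMeasure] (hp : 2 ≤ p) (hv : IsPLaplaceSubsolOn p 0 v U) (hr : 0 < r)
    (hxr : closedBall x r ⊆ U) (hC : 0 ≤ C) (hsphere : ∀ z ∈ sphere x r, v z ≤ C * r ^ 2) :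
    μ (ball 0 (v x / r)) ≤
      2 * (ENNReal.ofReal (((finrank ℝ E + (p - 2)) * (2 * C)) ^ finrank ℝ E) *
        μ (ball x r ∩ {z | 0 < v z})) := by
  have hmeas : MeasurableSet (ball x r ∩ {z | 0 < v z}) := by
    have hcont := hv.continuousOn.mono (ball_subset_closedBall.trans hxr)
    exact (hcont.isOpen_inter_preimage isOpen_ball isOpen_Ioi).measurableSet
  have hcover := ball_subset_image_contactMap hp hv hr hxr hC hsphere
  simp only [mem_insert_iff, mem_singleton_iff, exists_eq_or_imp, exists_eq_left] at hcover
  refine (measure_mono hcover).trans ((measure_union_le _ _).trans ?_)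
  rw [two_mul (ENNReal.ofReal _ * _)]
  exact add_le_add (addHaar_image_le_of_abs_det_fderiv_le μ _ _ hmeas)
    (addHaar_image_le_of_abs_det_fderiv_le μ _ _ hmeas)

end ABP

section Decay

variable {E : Type*} [NormedAddCommGroup E] [InnerProductSpace ℝ E] [FiniteDimensional ℝ E]
  [MeasurableSpace E] [BorelSpace E] {μ : Measure E} [μ.IsAddHaarMeasure]
  {p r s S δ ε : ℝ} {v : E → ℝ} {U : Set E} {x y : E}

lemma div_pow_finrank_le_of_addHaar_pos_le (hp : 2 ≤ p) (hv : IsPLaplaceSubsolOn p 0 v U)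
    (hr : 0 < r) (hxr : closedBall x r ⊆ U) {C a : ℝ} (hC : 0 ≤ C)
    (hsphere : ∀ z ∈ sphere x r, v z ≤ C * r ^ 2) (ha : 0 ≤ a)
    (hpos : μ (ball x r ∩ {z | 0 < v z}) ≤ ENNReal.ofReal a * μ (ball 0 1)) (hx : 0 < v x) :
    (v x / r) ^ finrank ℝ E ≤
      2 * (((finrank ℝ E + (p - 2)) * (2 * C)) ^ finrank ℝ E * a) := by
  have hκ : 0 ≤ finrank ℝ E + (p - 2) := add_nonneg (Nat.cast_nonneg _) (sub_nonneg.2 hp)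
  set K := ((finrank ℝ E + (p - 2)) * (2 * C)) ^ finrank ℝ E
  have hK : 0 ≤ K := pow_nonneg (mul_nonneg hκ (by positivity)) _
  have hmeas : ENNReal.ofReal ((v x / r) ^ finrank ℝ E) * μ (ball 0 1) ≤
      ENNReal.ofReal (2 * (K * a)) * μ (ball 0 1) :=
    calc ENNReal.ofReal ((v x / r) ^ finrank ℝ E) * μ (ball 0 1)
        = μ (ball 0 (v x / r)) := (Measure.addHaar_ball_of_pos μ 0 (by positivity)).symm
      _ ≤ 2 * (ENNReal.ofReal K * (ENNReal.ofReal a * μ (ball 0 1))) := by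
        refine (addHaar_ball_le_of_isPLaplaceSubsolOn μ hp hv hr hxr hC hsphere).trans ?_
        gcongr
      _ = ENNReal.ofReal (2 * (K * a)) * μ (ball 0 1) := by
        rw [ENNReal.ofReal_mul zero_le_two, ENNReal.ofReal_mul hK, ENNReal.ofReal_ofNat]
        ring
  rwa [ENNReal.mul_le_mul_iff_left (measure_ball_pos μ 0 one_pos).ne' measure_ball_lt_top.ne,
    ENNReal.ofReal_le_ofReal_iff (by positivity)] at hmeas

lemma pow_finrank_le_of_density_le (hp : 2 ≤ p) (hv : IsPLaplaceSubsolOn p 0 v U) (hs : 0 < s)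
    (hxs : closedBall x (2 * s) ⊆ U) (hS : 0 ≤ S) (hvS : ∀ z ∈ closedBall x (2 * s), v z ≤ S)
    (hε : 0 ≤ ε) (hdens : μ ({z ∈ U | 0 < v z} ∩ closedBall x (2 * s)) ≤
      ENNReal.ofReal ε * μ (closedBall x (2 * s)))
    (hy : y ∈ closedBall x s) (hvy : 0 < v y) :
    v y ^ finrank ℝ E ≤
      2 * ε * (4 * (finrank ℝ E + (p - 2))) ^ finrank ℝ E * S ^ finrank ℝ E := by
  have hsub : closedBall y s ⊆ closedBall x (2 * s) :=
    closedBall_subset_closedBall' (by linarith [mem_closedBall.1 hy])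
  have hsphere : ∀ z ∈ sphere y s, v z ≤ S / s ^ 2 * s ^ 2 := fun z hz => by
    rw [div_mul_cancel₀ _ (by positivity)]
    exact hvS z (hsub (sphere_subset_closedBall hz))
  have hpos : μ (ball y s ∩ {z | 0 < v z}) ≤
      ENNReal.ofReal (ε * (2 * s) ^ finrank ℝ E) * μ (ball 0 1) := by
    rw [ENNReal.ofReal_mul hε, mul_assoc, ← Measure.addHaar_closedBall μ x (by positivity)]
    refine (measure_mono fun z hz => ?_).trans hdens
    exact ⟨⟨hxs (hsub (ball_subset_closedBall hz.1)), hz.2⟩, hsub (ball_subset_closedBall hz.1)⟩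
  have hpow := div_pow_finrank_le_of_addHaar_pos_le hp hv hs (hsub.trans hxs) (by positivity)
    hsphere (by positivity) hpos hvy
  rw [div_pow, div_le_iff₀ (by positivity)] at hpow
  refine hpow.trans_eq ?_
  have hscale : (finrank ℝ E + (p - 2)) * (2 * (S / s ^ 2)) * (2 * s) * s =
      4 * (finrank ℝ E + (p - 2)) * S := by
    field_simp
    ring
  rw [mul_assoc (2 * ε), ← mul_pow, ← hscale]
  simp only [mul_pow]
  ring

lemma le_mul_of_density_le (hp : 2 ≤ p) (hv : IsPLaplaceSubsolOn p 0 v U) (hs : 0 < s)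
    (hxs : closedBall x (2 * s) ⊆ U) (hS : 0 ≤ S) (hvS : ∀ z ∈ closedBall x (2 * s), v z ≤ S)
    (hε : 0 ≤ ε) (hdens : μ ({z ∈ U | 0 < v z} ∩ closedBall x (2 * s)) ≤
      ENNReal.ofReal ε * μ (closedBall x (2 * s)))
    (hδ : 0 ≤ δ) (hεδ : 2 * ε * (4 * (finrank ℝ E + (p - 2))) ^ finrank ℝ E < δ ^ finrank ℝ E)
    (hy : y ∈ closedBall x s) : v y ≤ δ * S := by
  by_contra! hlt
  have hvy : 0 < v y := (mul_nonneg hδ hS).trans_lt hlt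
  have hSpos : 0 < S := hvy.trans_le (hvS y (closedBall_subset_closedBall (by linarith) hy))
  have hpow := (pow_finrank_le_of_density_le hp hv hs hxs hS hvS hε hdens hy hvy).trans_lt
    (mul_lt_mul_of_pos_right hεδ (pow_pos hSpos _))
  rw [← mul_pow] at hpow
  exact hlt.not_gt (lt_of_pow_lt_pow_left₀ _ (mul_nonneg hδ hS) hpow)

lemma le_pow_mul_of_density_le (hp : 2 ≤ p) (hv : IsPLaplaceSubsolOn p 0 v U) {R : ℝ} (hR : 0 < R)
    (hxR : closedBall x R ⊆ U) (hS : 0 ≤ S) (hvS : ∀ z ∈ closedBall x R, v z ≤ S) (hε : 0 ≤ ε)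
    (hdens : ∀ r ∈ Ioc 0 R, μ ({z ∈ U | 0 < v z} ∩ closedBall x r) ≤
      ENNReal.ofReal ε * μ (closedBall x r))
    (hδ : 0 ≤ δ) (hεδ : 2 * ε * (4 * (finrank ℝ E + (p - 2))) ^ finrank ℝ E < δ ^ finrank ℝ E)
    (j : ℕ) : ∀ y ∈ closedBall x (R * (1 / 2) ^ j), v y ≤ δ ^ j * S := by
  induction j with
  | zero => simpa using hvS
  | succ j ih =>
    intro y hy
    have hdouble : 2 * (R * (1 / 2) ^ (j + 1)) = R * (1 / 2) ^ j := by ring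
    have hle : R * (1 / 2) ^ j ≤ R :=
      mul_le_of_le_one_right hR.le (pow_le_one₀ (by norm_num) (by norm_num))
    rw [pow_succ', mul_assoc]
    refine le_mul_of_density_le (μ := μ) hp hv (s := R * (1 / 2) ^ (j + 1)) (by positivity) ?_
      (by positivity) ?_ hε ?_ hδ hεδ hy <;> rw [hdouble]
    · exact (closedBall_subset_closedBall hle).trans hxR
    · exact ih
    · exact hdens _ ⟨by positivity, hle⟩

lemma exists_le_mul_pow_of_le_pow_mul {α : Type*} [PseudoMetricSpace α] {v : α → ℝ} {x : α}
    {R S : ℝ} (hR : 0 < R) (hS : 0 ≤ S) (k : ℕ)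
    (hv : ∀ j : ℕ, ∀ y ∈ closedBall x (R * (1 / 2) ^ j), v y ≤ ((1 / 2) ^ k) ^ j * S) :
    ∃ C, ∀ r ∈ Ioc 0 R, ∀ y ∈ closedBall x r, v y ≤ C * r ^ k := by
  refine ⟨(2 / R) ^ k * S, fun r hr y hy => ?_⟩
  obtain ⟨j, hlt, hle⟩ := exists_nat_pow_near_of_lt_one (div_pos hr.1 hR)
    ((div_le_one hR).2 hr.2) (y := (1 / 2 : ℝ)) (by norm_num) (by norm_num)
  rw [div_le_iff₀' hR] at hle
  calc v y ≤ ((1 / 2) ^ k) ^ j * S := hv j y (closedBall_subset_closedBall hle hy)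
    _ = ((1 / 2) ^ j) ^ k * S := by rw [pow_right_comm]
    _ ≤ (2 / R * r) ^ k * S := by
      gcongr
      rw [pow_succ, lt_div_iff₀ hR] at hlt
      rw [div_mul_eq_mul_div, le_div_iff₀ hR]
      linarith
    _ = (2 / R) ^ k * S * r ^ k := by ring

lemma exists_eventually_le_mul_pow_of_density_zero (hp : 2 ≤ p) (hv : IsPLaplaceSubsolOn p 0 v U)
    (hU : U ∈ 𝓝 x) (hdens : Tendsto
      (fun r => μ ({z ∈ U | 0 < v z} ∩ closedBall x r) / μ (closedBall x r)) (𝓝[>] 0) (𝓝 0))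
    (k : ℕ) : ∃ C, ∀ᶠ r in 𝓝[>] (0 : ℝ), ∀ y ∈ closedBall x r, v y ≤ C * r ^ k := by
  obtain ⟨ε, hε, hεδ⟩ := exists_pos_mul_lt (pow_pos (pow_pos (one_half_pos (α := ℝ)) k)
    (finrank ℝ E)) (2 * (4 * (finrank ℝ E + (p - 2))) ^ finrank ℝ E)
  obtain ⟨R, hR, hxR⟩ := (nhdsGT_basis_Ioc (0 : ℝ)).eventually_iff.1
    (((tendsto_order.1 hdens).2 _ (ENNReal.ofReal_pos.2 hε)).and
      ((eventually_closedBall_subset hU).filter_mono nhdsWithin_le_nhds))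
  have hsub := (hxR (right_mem_Ioc.2 hR)).2
  obtain ⟨S, hvS⟩ := (isCompact_closedBall x R).exists_bound_of_continuousOn
    (hv.continuousOn.mono hsub)
  have hS : 0 ≤ S := (norm_nonneg _).trans (hvS x (mem_closedBall_self (le_of_lt hR)))
  have hdensR : ∀ r ∈ Ioc 0 R, μ ({z ∈ U | 0 < v z} ∩ closedBall x r) ≤
      ENNReal.ofReal ε * μ (closedBall x r) := fun r hr =>
    (ENNReal.div_le_iff (measure_closedBall_pos μ x hr.1).ne'
      measure_closedBall_lt_top.ne).1 (hxR hr).1.le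
  obtain ⟨C, hC⟩ := exists_le_mul_pow_of_le_pow_mul hR hS k (le_pow_mul_of_density_le hp hv
    hR hsub hS (fun z hz => (le_abs_self _).trans (hvS z hz)) hε.le hdensR (by positivity)
    (by linarith))
  exact ⟨C, mem_of_superset (Ioc_mem_nhdsGT hR) hC⟩

/-- Non-degeneracy of order `k` at `x`: `sup_{B_r(x)} v ≥ c r^k` for all small `r > 0`, expressed by
a point of the closed ball so that no junk supremum occurs. -/
def HasPowerGrowthAt {α : Type*} [PseudoMetricSpace α] (v : α → ℝ) (c : ℝ) (k : ℕ) (x : α) : Prop :=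
  ∀ᶠ r in 𝓝[>] (0 : ℝ), ∃ y ∈ closedBall x r, c * r ^ k ≤ v y

lemma HasPowerGrowthAt.not_eventually_le {α : Type*} [PseudoMetricSpace α] {v : α → ℝ} {c C : ℝ}
    {k : ℕ} {x : α} (hv : HasPowerGrowthAt v c k x) (hc : 0 < c) :
    ¬ ∀ᶠ r in 𝓝[>] (0 : ℝ), ∀ y ∈ closedBall x r, v y ≤ C * r ^ (k + 1) := by
  intro hle
  have hlim : Tendsto (fun r : ℝ => C * r) (𝓝[>] 0) (𝓝 0) := by
    have hcont : Continuous fun r : ℝ => C * r := by fun_prop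
    simpa using (hcont.tendsto 0).mono_left nhdsWithin_le_nhds
  obtain ⟨r, ⟨⟨⟨y, hy, hcy⟩, hle⟩, hCr⟩, hr⟩ :=
    (((hv.and hle).and (hlim.eventually (gt_mem_nhds hc))).and self_mem_nhdsWithin).exists
  have hpow : 0 < r ^ k := pow_pos hr k
  have hchain := hcy.trans (hle y hy)
  rw [pow_succ', ← mul_assoc] at hchain
  exact hCr.not_ge (le_of_mul_le_mul_right hchain hpow)

lemma addHaar_nonpos_inter_hasPowerGrowthAt_eq_zero (μ : Measure E) [μ.IsAddHaarMeasure]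
    (hp : 2 ≤ p) (hU : IsOpen U) (hv : IsPLaplaceSubsolOn p 0 v U) :
    μ {x ∈ U | v x ≤ 0 ∧ ∃ c > 0, ∃ k, HasPowerGrowthAt v c k x} = 0 := by
  have hmeas : MeasurableSet {z ∈ U | 0 < v z} :=
    (hv.continuousOn.isOpen_inter_preimage hU isOpen_Ioi).measurableSet
  refine measure_mono_null ?_
    (ae_iff.1 (Besicovitch.ae_tendsto_measure_inter_div_of_measurableSet μ hmeas))
  rintro x ⟨hxU, hx, c, hc, k, hgrow⟩ hdens
  rw [indicator_of_notMem fun hmem => hmem.2.not_ge hx] at hdens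
  obtain ⟨C, hC⟩ := exists_eventually_le_mul_pow_of_density_zero hp hv (hU.mem_nhds hxU) hdens
    (k + 1)
  exact hgrow.not_eventually_le hc hC

end Decay

section Nondegeneracy

lemma exists_ne_zero_add_one_mul_le {q : ℝ} (hq : q < 1) : ∃ j : ℕ, j ≠ 0 ∧ (j + 1) * q ≤ j := by
  obtain ⟨n, hn⟩ := exists_nat_ge (q / (1 - q))
  rw [div_le_iff₀ (sub_pos.2 hq)] at hn
  exact ⟨n + 1, n.succ_ne_zero, by push_cast; linarith⟩

lemma eventually_const_mul_lt_mul_rpow {q m : ℝ} (hq : q < 1) (hm : 0 < m) (D : ℝ) :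
    ∀ᶠ c in 𝓝[>] (0 : ℝ), D * c < m * c ^ q := by
  have hlim : Tendsto (fun c : ℝ => D * c ^ (1 - q)) (𝓝[>] 0) (𝓝 0) := by
    have := (Real.continuousAt_rpow_const 0 (1 - q) (Or.inr (sub_nonneg.2 hq.le))).const_mul D
    rw [ContinuousAt, Real.zero_rpow (sub_pos.2 hq).ne', mul_zero] at this
    exact this.mono_left nhdsWithin_le_nhds
  filter_upwards [hlim.eventually (gt_mem_nhds hm), self_mem_nhdsWithin] with c hc hpos
  calc D * c = D * c ^ (1 - q) * c ^ q := by
        rw [mul_assoc, ← Real.rpow_add hpos, sub_add_cancel, Real.rpow_one]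
    _ < m * c ^ q := mul_lt_mul_of_pos_right hc (Real.rpow_pos_of_pos hpos q)

lemma rpow_mul_pow_le_mul_pow_succ_rpow {q c ρ : ℝ} {j : ℕ} (hj : (j + 1) * q ≤ j) (hc : 0 ≤ c)
    (hρ : 0 < ρ) (hρ1 : ρ ≤ 1) : c ^ q * ρ ^ j ≤ (c * ρ ^ (j + 1)) ^ q := by
  rw [Real.mul_rpow hc (by positivity), ← Real.rpow_natCast ρ (j + 1), ← Real.rpow_mul hρ.le,
    ← Real.rpow_natCast]
  refine mul_le_mul_of_nonneg_left ?_ (by positivity)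
  exact Real.rpow_le_rpow_of_exponent_ge hρ hρ1 (by push_cast; exact hj)

variable {E : Type*} [NormedAddCommGroup E] [InnerProductSpace ℝ E]

lemma hasGradientAt_const_mul_norm_sub_sq_pow [CompleteSpace E] (c : ℝ) (j : ℕ) (x y : E) :
    HasGradientAt (fun z => c * (‖z - x‖ ^ 2) ^ (j + 1))
      ((2 * c * (j + 1) * (‖y - x‖ ^ 2) ^ j) • (y - x)) y := by
  have hsq := ((hasFDerivAt_id (𝕜 := ℝ) y).sub_const x).norm_sq
  rw [hasGradientAt_iff_hasFDerivAt]
  refine ((hsq.pow (j + 1)).const_mul c).congr_fderiv ?_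
  ext h
  simp only [id_eq, add_tsub_cancel_right, nsmul_eq_mul, Nat.cast_add, Nat.cast_one, map_sub,
    ContinuousLinearMap.comp_id, smul_apply, sub_apply, coe_innerSL_apply, Nat.cast_ofNat,
    smul_eq_mul, map_smul, InnerProductSpace.toDual_apply_apply]
  ring

lemma exists_hasFDerivAt_mul_norm_sub_sq_pow_smul {a : ℝ} (ha : 0 ≤ a) (j : ℕ) (x y : E) :
    ∃ B : E →L[ℝ] E, HasFDerivAt (fun z => (a * (‖z - x‖ ^ 2) ^ j) • (z - x)) B y ∧
      ∀ h, ⟪B h, h⟫_ℝ ≤ a * (2 * j + 1) * (‖y - x‖ ^ 2) ^ j * ‖h‖ ^ 2 := by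
  have hsub := (hasFDerivAt_id (𝕜 := ℝ) y).sub_const x
  refine ⟨_, ((hsub.norm_sq.pow j).const_mul a).smul hsub, fun h => ?_⟩
  have hinner : ⟪y - x, h⟫_ℝ ^ 2 ≤ ‖y - x‖ ^ 2 * ‖h‖ ^ 2 := by
    rw [← mul_pow]
    exact sq_le_sq' (neg_le_of_abs_le (abs_real_inner_le_norm _ _)) (real_inner_le_norm _ _)
  have hradial : j * ((‖y - x‖ ^ 2) ^ (j - 1) * ⟪y - x, h⟫_ℝ ^ 2) ≤
      j * ((‖y - x‖ ^ 2) ^ j * ‖h‖ ^ 2) := by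
    rcases eq_or_ne j 0 with rfl | hj
    · simp
    rw [← pow_sub_one_mul hj (‖y - x‖ ^ 2), mul_assoc _ (‖y - x‖ ^ 2)]
    gcongr
  calc _ = a * (‖y - x‖ ^ 2) ^ j * ‖h‖ ^ 2 +
        2 * a * (j * ((‖y - x‖ ^ 2) ^ (j - 1) * ⟪y - x, h⟫_ℝ ^ 2)) := by
        simp only [id_eq, nsmul_eq_mul, ContinuousLinearMap.comp_id, add_apply, smul_apply,
          ContinuousLinearMap.id_apply, ContinuousLinearMap.smulRight_apply, coe_innerSL_apply,
          Nat.cast_ofNat, smul_eq_mul, inner_add_left, inner_smul_left, Real.ringHom_apply,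
          real_inner_self_eq_norm_sq]
        ring
    _ ≤ a * (‖y - x‖ ^ 2) ^ j * ‖h‖ ^ 2 +
        2 * a * (j * ((‖y - x‖ ^ 2) ^ j * ‖h‖ ^ 2)) := by gcongr
    _ = a * (2 * j + 1) * (‖y - x‖ ^ 2) ^ j * ‖h‖ ^ 2 := by ring

variable [FiniteDimensional ℝ E] {p q m c : ℝ} {j : ℕ} {v : E → ℝ} {U : Set E} {x y e : E}

lemma exists_inner_pos_of_trace_pos {A : E →L[ℝ] E} (hA : 0 < LinearMap.trace ℝ E A) :
    ∃ e, ‖e‖ = 1 ∧ 0 < ⟪A e, e⟫_ℝ := by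
  let b := stdOrthonormalBasis ℝ E
  rw [LinearMap.trace_eq_sum_inner _ b] at hA
  obtain ⟨i, -, hi⟩ := Finset.exists_lt_of_sum_lt (f := fun _ => (0 : ℝ)) (by simpa using hA)
  exact ⟨b i, b.norm_eq_one i, by simpa [real_inner_comm] using hi⟩

lemma norm_gradient_le_one_of_norm_pFlux_le_one (hp : 2 ≤ p) (hv : ‖pFlux p v y‖ ≤ 1) :
    ‖∇ v y‖ ≤ 1 := by
  by_contra! hlt
  rw [pFlux, norm_smul, Real.norm_of_nonneg (by positivity)] at hv
  have := Real.one_le_rpow hlt.le (sub_nonneg.2 hp)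
  exact hv.not_gt (hlt.trans_le (le_mul_of_one_le_left (norm_nonneg _) this))

lemma inner_pFlux_le_inner_gradient (hp : 2 ≤ p) (hv : ‖pFlux p v y‖ ≤ 1)
    (he : 0 < ⟪pFlux p v y, e⟫_ℝ) : ⟪pFlux p v y, e⟫_ℝ ≤ ⟪∇ v y, e⟫_ℝ := by
  have hle : ‖∇ v y‖ ^ (p - 2) ≤ 1 := Real.rpow_le_one (norm_nonneg _)
    (norm_gradient_le_one_of_norm_pFlux_le_one hp hv) (sub_nonneg.2 hp)
  rw [pFlux, real_inner_smul_left] at he ⊢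
  exact mul_le_of_le_one_left (pos_of_mul_pos_right he (by positivity)).le hle

-- Near a critical point `‖∇v‖^(p-2) ≤ 1`, so in a direction in which the flux grows linearly `∇v`
-- grows at least as fast, even though `∇v` need not be differentiable there.
lemma exists_eventually_add_sq_le_of_pLaplacian_pos (hp : 2 ≤ p)
    (hv : ∀ᶠ z in 𝓝 x, DifferentiableAt ℝ v z) (hflux : DifferentiableAt ℝ (pFlux p v) x)
    (hgrad : ∇ v x = 0) (hpos : 0 < pLaplacian p v x) :
    ∃ e, ‖e‖ = 1 ∧ ∃ b > 0, ∀ᶠ s in 𝓝[>] (0 : ℝ), v x + b * s ^ 2 ≤ v (x + s • e) := by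
  obtain ⟨e, he, ha⟩ := exists_inner_pos_of_trace_pos hpos
  set a := ⟪fderiv ℝ (pFlux p v) x e, e⟫_ℝ
  have hline := tendsto_add_smul_nhds_zero x e
  have hfluxderiv : HasDerivAt (fun s : ℝ => ⟪pFlux p v (x + s • e), e⟫_ℝ) a 0 := by
    have h0 : HasFDerivAt (pFlux p v) (fderiv ℝ (pFlux p v) x) (x + (0 : ℝ) • e) := by
      simpa using hflux.hasFDerivAt
    simpa using (hasDerivAt_comp_add_smul h0).inner ℝ (hasDerivAt_const (0 : ℝ) e)
  have hflux0 : pFlux p v x = 0 := by simp [pFlux, hgrad]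
  have hsmall : ∀ᶠ z in 𝓝 x, ‖pFlux p v z‖ < 1 :=
    hflux.continuousAt.norm.eventually (gt_mem_nhds (by simp [hflux0]))
  have hslope : ∀ᶠ s in 𝓝[>] (0 : ℝ), a / 2 * (s - 0) ≤ ⟪∇ v (x + s • e), e⟫_ℝ := by
    filter_upwards [eventually_mul_sub_le_of_hasDerivAt hfluxderiv (by simp [hflux0])
      (half_lt_self ha), (hline.eventually hsmall).filter_mono nhdsWithin_le_nhds,
      self_mem_nhdsWithin] with s hs hs1 hs0
    have hs0 : 0 < a / 2 * (s - 0) := mul_pos (half_pos ha) (sub_pos.2 hs0)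
    exact hs.trans (inner_pFlux_le_inner_gradient hp hs1.le (hs0.trans_le hs))
  have hderiv : ∀ᶠ s in 𝓝 (0 : ℝ),
      HasDerivAt (fun s => v (x + s • e)) ⟪∇ v (x + s • e), e⟫_ℝ s :=
    (hline.eventually hv).mono fun s hs =>
      hasDerivAt_comp_add_smul_of_hasGradientAt hs.hasGradientAt
  refine ⟨e, he, a / 2 / 2, by positivity, ?_⟩
  simpa using eventually_add_sq_le_of_mul_sub_le_deriv hderiv hslope

lemma not_eventually_le_add_norm_sub_sq_pow (hp : 2 ≤ p)
    (hv : ∀ᶠ z in 𝓝 x, DifferentiableAt ℝ v z) (hflux : DifferentiableAt ℝ (pFlux p v) x)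
    (hgrad : ∇ v x = 0) (hpos : 0 < pLaplacian p v x) (hj : j ≠ 0) :
    ¬ ∀ᶠ z in 𝓝 x, v z ≤ v x + c * (‖z - x‖ ^ 2) ^ (j + 1) := by
  intro hle
  obtain ⟨e, he, b, hb, hgrow⟩ := exists_eventually_add_sq_le_of_pLaplacian_pos hp hv hflux
    hgrad hpos
  have hlim : Tendsto (fun s : ℝ => c * (s ^ 2) ^ j) (𝓝[>] 0) (𝓝 0) := by
    have hcont : Continuous fun s : ℝ => c * (s ^ 2) ^ j := by fun_prop
    simpa [hj] using (hcont.tendsto 0).mono_left nhdsWithin_le_nhds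
  obtain ⟨s, ⟨⟨hbs, hcs⟩, hsmall⟩, hs⟩ := (((hgrow.and
    (((tendsto_add_smul_nhds_zero x e).eventually hle).filter_mono nhdsWithin_le_nhds)).and
    (hlim.eventually (gt_mem_nhds hb))).and self_mem_nhdsWithin).exists
  have hsq : 0 < s ^ 2 := pow_pos hs 2
  have hnorm : ‖x + s • e - x‖ ^ 2 = s ^ 2 := by simp [norm_smul, he]
  rw [hnorm, pow_succ, ← mul_assoc] at hcs
  linarith [mul_lt_mul_of_pos_right hsmall hsq]

lemma pLaplacian_le_of_isLocalMax_sub_norm_sub_sq_pow (hp : 2 ≤ p)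
    (hv : ∀ᶠ z in 𝓝 y, DifferentiableAt ℝ v z) (hflux : DifferentiableAt ℝ (pFlux p v) y)
    (hc : 0 < c) (hcj : 2 * c * (j + 1) ≤ 1) (hyx : y ≠ x) (hy : ‖y - x‖ ≤ 1)
    (hmax : IsLocalMax (fun z => v z - c * (‖z - x‖ ^ 2) ^ (j + 1)) y) :
    pLaplacian p v y ≤
      (finrank ℝ E + (p - 2)) * (2 * (j + 1) * (2 * j + 1)) * c * (‖y - x‖ ^ 2) ^ j := by
  have hgrad : ∇ v y = (2 * c * (j + 1) * (‖y - x‖ ^ 2) ^ j) • (y - x) :=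
    gradient_eq_of_isLocalMax_sub hv.self_of_nhds
      (hasGradientAt_const_mul_norm_sub_sq_pow c j x y) hmax
  have hpos : 0 < ‖y - x‖ := norm_pos_iff.2 (sub_ne_zero.2 hyx)
  have hne : ∇ v y ≠ 0 := by
    rw [hgrad]
    exact smul_ne_zero (by positivity) (sub_ne_zero.2 hyx)
  have hnorm : ‖∇ v y‖ ≤ 1 := by
    rw [hgrad, norm_smul, Real.norm_of_nonneg (by positivity)]
    exact mul_le_one₀ (mul_le_one₀ hcj (by positivity)
      (pow_le_one₀ (by positivity) (pow_le_one₀ hpos.le hy))) hpos.le hy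
  obtain ⟨B, hB, hBle⟩ := exists_hasFDerivAt_mul_norm_sub_sq_pow_smul
    (by positivity : 0 ≤ 2 * c * (j + 1)) j x y
  have hA := (differentiableAt_gradient_of_pFlux (by linarith) hflux hne).hasFDerivAt
  have hle := pLaplacian_le_of_inner_hessian_le hp hA hne fun h =>
    (inner_hessian_le_of_isLocalMax_sub hv hA (Eventually.of_forall
      (hasGradientAt_const_mul_norm_sub_sq_pow c j x)) hB hmax h).trans (hBle h)
  have hκ : 0 ≤ finrank ℝ E + (p - 2) := add_nonneg (Nat.cast_nonneg _) (sub_nonneg.2 hp)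
  refine hle.trans ((mul_le_of_le_one_left (mul_nonneg hκ (by positivity))
    (Real.rpow_le_one (norm_nonneg _) hnorm (sub_nonneg.2 hp))).trans_eq ?_)
  ring

lemma not_isLocalMax_sub_norm_sub_sq_pow (hp : 2 ≤ p) (hq : 0 ≤ q) (hm : 0 < m)
    (hv : IsPLaplaceSubsolOn p (fun s => m * s ^ q) v U) (hU : U ∈ 𝓝 y) (hj0 : j ≠ 0)
    (hj : (j + 1) * q ≤ j) (hc : 0 < c) (hcj : 2 * c * (j + 1) ≤ 1)
    (hcm : (finrank ℝ E + (p - 2)) * (2 * (j + 1) * (2 * j + 1)) * c < m * c ^ q)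
    (hy : ‖y - x‖ ≤ 1) (hlt : c * (‖y - x‖ ^ 2) ^ (j + 1) < v y) :
    ¬ IsLocalMax (fun z => v z - c * (‖z - x‖ ^ 2) ^ (j + 1)) y := by
  intro hmax
  have hyU := mem_of_mem_nhds hU
  have hdiff : ∀ᶠ z in 𝓝 y, DifferentiableAt ℝ v z := mem_of_superset hU hv.differentiableAt
  have hflux := hv.differentiableAt_pFlux y hyU
  have hvy : 0 < v y := lt_of_le_of_lt (by positivity) hlt
  have hsub := hv.le_pLaplacian y hyU hvy
  rcases eq_or_ne y x with rfl | hyx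
  · have hgrad : ∇ v y = 0 := by
      simpa using gradient_eq_of_isLocalMax_sub hdiff.self_of_nhds
        (hasGradientAt_const_mul_norm_sub_sq_pow c j y y) hmax
    have hpos : 0 < pLaplacian p v y :=
      (mul_pos hm (Real.rpow_pos_of_pos hvy q)).trans_le hsub
    exact not_eventually_le_add_norm_sub_sq_pow hp hdiff hflux hgrad hpos hj0
      (hmax.mono fun z hz => by simpa using hz)
  · have hρ : 0 < ‖y - x‖ ^ 2 := pow_pos (norm_pos_iff.2 (sub_ne_zero.2 hyx)) 2
    refine lt_irrefl (pLaplacian p v y) ?_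
    calc pLaplacian p v y
        ≤ (finrank ℝ E + (p - 2)) * (2 * (j + 1) * (2 * j + 1)) * c * (‖y - x‖ ^ 2) ^ j :=
          pLaplacian_le_of_isLocalMax_sub_norm_sub_sq_pow hp hdiff hflux hc hcj hyx hy hmax
      _ < m * c ^ q * (‖y - x‖ ^ 2) ^ j := mul_lt_mul_of_pos_right hcm (by positivity)
      _ = m * (c ^ q * (‖y - x‖ ^ 2) ^ j) := mul_assoc _ _ _
      _ ≤ m * (c * (‖y - x‖ ^ 2) ^ (j + 1)) ^ q := by
        gcongr
        exact rpow_mul_pow_le_mul_pow_succ_rpow hj hc.le hρ (pow_le_one₀ (norm_nonneg _) hy)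
      _ ≤ m * v y ^ q := by gcongr
      _ ≤ pLaplacian p v y := hsub

variable (E) in
lemma exists_mul_pow_le_of_isPLaplaceSubsolOn (hp : 2 ≤ p) (hq : 0 ≤ q) (hq1 : q < 1)
    (hm : 0 < m) : ∃ c > 0, ∃ k : ℕ, ∀ (v : E → ℝ) (U : Set E),
      IsPLaplaceSubsolOn p (fun s => m * s ^ q) v U → ∀ x r, closedBall x r ⊆ U → 0 < v x →
        0 ≤ r → r ≤ 1 → ∃ y ∈ closedBall x r, c * r ^ k ≤ v y := by
  obtain ⟨j, hj0, hj⟩ := exists_ne_zero_add_one_mul_le hq1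
  have hsmall : ∀ᶠ c : ℝ in 𝓝[>] 0, c < 1 / (2 * (j + 1)) :=
    (gt_mem_nhds (by positivity)).filter_mono nhdsWithin_le_nhds
  obtain ⟨c, ⟨hcm, hcj⟩, hc⟩ := (((eventually_const_mul_lt_mul_rpow hq1 hm
    ((finrank ℝ E + (p - 2)) * (2 * (j + 1) * (2 * j + 1)))).and hsmall).and
    self_mem_nhdsWithin).exists
  refine ⟨c, hc, 2 * (j + 1), fun v U hv x r hxr hx hr hr1 => ?_⟩
  by_contra! hlt
  have hcont : ContinuousOn (fun z => v z - c * (‖z - x‖ ^ 2) ^ (j + 1)) (closedBall x r) :=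
    (hv.continuousOn.mono hxr).sub (by fun_prop)
  obtain ⟨y, hy, hpos, hmax⟩ := exists_isMaxOn_sub_inner (ξ := 0) hr hcont
    (fun z hz => by
      have := hlt z (sphere_subset_closedBall hz)
      rw [pow_mul, ← mem_sphere_iff_norm.1 hz] at this
      linarith) (by simpa using hx)
  have hnhds : closedBall x r ∈ 𝓝 y := closedBall_mem_nhds_of_mem hy
  refine not_isLocalMax_sub_norm_sub_sq_pow hp hq hm hv (mem_of_superset hnhds hxr) hj0 hj hc ?_
    hcm ((mem_ball_iff_norm.1 hy).le.trans hr1) (sub_pos.1 hpos)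
    (by simpa using hmax.isLocalMax hnhds)
  rw [lt_div_iff₀ (by positivity)] at hcj
  linarith

end Nondegeneracy

section SpaceTime

lemma hasPowerGrowthAt_of_mem_closure_pos {X T : Type*} [PseudoMetricSpace X] [ProperSpace X]
    [TopologicalSpace T] {D : Set (X × T)} {u : X × T → ℝ} (hD : IsOpen D) (hu : ContinuousOn u D)
    {c : ℝ} {k : ℕ}
    (hgrowth : ∀ x t r, closedBall x r ⊆ (·, t) ⁻¹' D → 0 < u (x, t) → 0 ≤ r → r ≤ 1 →
      ∃ y ∈ closedBall x r, c * r ^ k ≤ u (y, t))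
    {x : X} {t : T} (hxt : (x, t) ∈ D) (hcl : (x, t) ∈ closure {z ∈ D | 0 < u z}) :
    HasPowerGrowthAt (fun y => u (y, t)) (c / 2 ^ k) k x := by
  have hslice : (·, t) ⁻¹' D ∈ 𝓝 x :=
    (hD.preimage (Continuous.prodMk_left t)).mem_nhds hxt
  filter_upwards [(eventually_closedBall_subset hslice).filter_mono nhdsWithin_le_nhds,
    Ioc_mem_nhdsGT one_pos] with r hr hr01
  by_contra! hlt
  have hnear : ∀ᶠ t' in 𝓝 t, ∀ y ∈ closedBall x r,
      (y, t') ∈ D ∧ u (y, t') < c / 2 ^ k * r ^ k := by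
    refine (isCompact_closedBall x r).eventually_forall_of_forall_eventually fun y hy => ?_
    have hyt : D ∈ 𝓝 (y, t) := hD.mem_nhds (hr hy)
    exact (continuous_swap.tendsto (t, y)).eventually
      (Filter.inter_mem hyt ((hu.continuousAt hyt).eventually (gt_mem_nhds (hlt y hy))))
  obtain ⟨⟨x', t'⟩, ⟨hx', ht'⟩, -, hpos⟩ := mem_closure_iff_nhds.1 hcl _
    (prod_mem_nhds (closedBall_mem_nhds x (half_pos hr01.1)) hnear)
  have hsub : closedBall x' (r / 2) ⊆ closedBall x r :=
    closedBall_subset_closedBall' (by linarith [mem_closedBall.1 hx'])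
  obtain ⟨y, hy, hcy⟩ := hgrowth x' t' (r / 2) (fun y hy => (ht' y (hsub hy)).1) hpos
    (by linarith [hr01.1]) (by linarith [hr01.2])
  refine (ht' y (hsub hy)).2.not_ge (hcy.trans_eq' ?_)
  rw [div_pow]
  ring

lemma isPLaplaceSubsolOn_slice {N : ℕ} {p q m : ℝ} {lam u : Euc N × ℝ → ℝ} {D : Set (Euc N × ℝ)}
    (hlam : ∀ z ∈ D, m ≤ lam z) (hu : IsDCSol N p q lam u D) (hmono : ∀ z ∈ D, 0 ≤ timeDeriv N u z)
    (t : ℝ) :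
    IsPLaplaceSubsolOn p (fun s => m * s ^ q) (fun y => u (y, t)) ((·, t) ⁻¹' D) where
  differentiableAt y hy := (hu.2 _ hy).1
  differentiableAt_pFlux y hy := (hu.2 _ hy).2.2.1
  le_pLaplacian y hy hpos := by
    have heq : pLap N p u (y, t) - timeDeriv N u (y, t) = lam (y, t) * u (y, t) ^ q := by
      simpa [plusPowQ, hpos, hpos.le] using (hu.2 _ hy).2.2.2
    have hle : m * u (y, t) ^ q ≤ lam (y, t) * u (y, t) ^ q := by
      gcongr
      exact hlam _ hy
    calc m * u (y, t) ^ q ≤ pLap N p u (y, t) := by linarith [hmono _ hy]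
      _ = pLaplacian p (fun y => u (y, t)) y := rfl

lemma prod_measure_eq_zero_of_forall_slice {α β : Type*} [MeasurableSpace α] [MeasurableSpace β]
    {μ : Measure α} {ν : Measure β} [SFinite μ] [SFinite ν] {s : Set (α × β)}
    (hs : MeasurableSet s) (hslice : ∀ t, μ ((·, t) ⁻¹' s) = 0) : μ.prod ν s = 0 := by
  simp [Measure.prod_apply_symm hs, hslice]

theorem free_boundary_measure_zero_general {N : ℕ} {p q m : ℝ} (hp : 2 ≤ p) (hq0 : 0 ≤ q)
    (hq1 : q < 1) (hm : 0 < m) {lam u : Euc N × ℝ → ℝ} {D : Set (Euc N × ℝ)} (hD : IsOpen D)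
    (hlam : ∀ z ∈ D, m ≤ lam z) (hu : IsDCSol N p q lam u D)
    (hmono : ∀ z ∈ D, 0 ≤ timeDeriv N u z) :
    volume (frontier {z ∈ D | 0 < u z} ∩ D) = 0 := by
  obtain ⟨c, hc, k, hgrowth⟩ := exists_mul_pow_le_of_isPLaplaceSubsolOn (Euc N) hp hq0 hq1 hm
  have hsubsol := isPLaplaceSubsolOn_slice hlam hu hmono
  have hopen : IsOpen {z ∈ D | 0 < u z} := hu.1.isOpen_inter_preimage hD isOpen_Ioi
  refine prod_measure_eq_zero_of_forall_slice
    (isClosed_frontier.measurableSet.inter hD.measurableSet) fun t => ?_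
  refine measure_mono_null ?_ (addHaar_nonpos_inter_hasPowerGrowthAt_eq_zero volume hp
    (hD.preimage (Continuous.prodMk_left t))
    ((hsubsol t).mono_source fun s hs => by simp only [Pi.zero_apply]; positivity))
  rintro x ⟨hfrontier, hxt⟩
  rw [hopen.frontier_eq] at hfrontier
  exact ⟨hxt, not_lt.1 fun hpos => hfrontier.2 ⟨hxt, hpos⟩, c / 2 ^ k, by positivity, k,
    hasPowerGrowthAt_of_mem_closure_pos hD hu.1
      (fun x t => hgrowth _ _ (hsubsol t) x) hxt hfrontier.1⟩

lemma isOpen_cylQ (N : ℕ) (θ r : ℝ) (z0 : Euc N × ℝ) : IsOpen (cylQ N θ r z0) :=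
  isOpen_ball.prod isOpen_Ioo

lemma cylQ_subset_cylQ {N : ℕ} {θ r s : ℝ} (hθ : 0 ≤ θ) (hr : 0 ≤ r) (hrs : r ≤ s)
    (z0 : Euc N × ℝ) : cylQ N θ r z0 ⊆ cylQ N θ s z0 := by
  have hpow := Real.rpow_le_rpow hr hrs hθ
  exact prod_mono (ball_subset_ball hrs) (Ioo_subset_Ioo (by linarith) (by linarith))

lemma thetaV_nonneg {p q : ℝ} (hp : 2 ≤ p) (hq : q < 1) : 0 ≤ thetaV p q :=
  div_nonneg (mul_nonneg (by linarith) (by linarith)) (by linarith)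

end SpaceTime

/-- **Remark after Corollary 4.1.** The free boundary `∂{u>0} ∩ Q_{1/2}` has
`(N+1)`-dimensional Lebesgue measure zero. -/
theorem free_boundary_measure_zero
    (N : ℕ) (hN : 1 ≤ N) (p q m M : ℝ)
    (hp : 2 ≤ p) (hq0 : 0 ≤ q) (hq1 : q < 1) (hm : 0 < m) (hmM : m ≤ M) :
    ∀ u : Euc N × ℝ → ℝ, memJ N p q m M u →
      volume (frontier {z ∈ cylQ N (thetaV p q) 1 (0, 0) | 0 < u z} ∩
        cylQ N (thetaV p q) (1 / 2) (0, 0)) = 0 := by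
  rintro u ⟨lam, hlam, hu, -, hmono, -⟩
  exact measure_mono_null
    (inter_subset_inter_right _
      (cylQ_subset_cylQ (thetaV_nonneg hp hq1) (by norm_num) (by norm_num) _))
    (free_boundary_measure_zero_general hp hq0 hq1 hm (isOpen_cylQ _ _ _ _)
      (fun z hz => (hlam z hz).1) hu hmono)
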